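/- Let f : ℕ → ℚ be a sequence with f(i) ≠ 0 for all i ≥ 1, and define B_f(n,n) = 1 and, for k < n, B_f(n,k) = Σ_{s=1}^{n−k} (−1)^s Σ_{(k_1,…,k_s) composition of n−k into s positive parts} f!(n)/(f!(k)·f!(k_1)⋯f!(k_s)). Let (Φ_n(x))_{n ≥ 0} be a sequence of rational polynomials with Φ_0(x) = 1. Then the following are equivalent: (i) for all n, Φ_n(x) = Σ_{k=0}^{n} B_f(n,k)·x^k; (ii) for all n, x^n = Σ_{k=0}^{n} C_f(n,k)·Φ_k(x). -/

import Mathlib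

open Polynomial

/-- The F-factorial of a rational-valued sequence: `ffact f n = ∏_{i=1}^{n} f i`. -/
def ffact (f : ℕ → ℚ) (n : ℕ) : ℚ := ∏ i ∈ Finset.range n, f (i + 1)

/-- Compositions of `m` into `s` positive parts, as tuples `Fin s → ℕ`. -/
def comps (s m : ℕ) : Finset (Fin s → ℕ) :=
  (Finset.Nat.antidiagonalTuple s m).filter fun k => ∀ j, 1 ≤ k j

/-- The F-nomial coefficient `C_f(n,k) = f!(n)/(f!(k)·f!(n-k))`. -/
def Cf (f : ℕ → ℚ) (n k : ℕ) : ℚ := ffact f n / (ffact f k * ffact f (n - k))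

/-- The inverse array: `B_f(n,n) = 1` and for `k < n`,
`B_f(n,k) = Σ_{s=1}^{n-k} (-1)^s Σ_{compositions of n-k} f!(n)/(f!(k)·f!(k₁)⋯f!(k_s))`. -/
def Bf (f : ℕ → ℚ) (n k : ℕ) : ℚ :=
  if n = k then 1 else
    ∑ s ∈ Finset.Icc 1 (n - k), (-1 : ℚ) ^ s *
      ∑ c ∈ comps s (n - k), ffact f n / (ffact f k * ∏ j, ffact f (c j))

open PowerSeries in
lemma coeff_pow_comps (h : ℕ → ℚ) (h0 : h 0 = 0) (s m : ℕ) :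
    PowerSeries.coeff m ((PowerSeries.mk h) ^ s) = ∑ c ∈ comps s m, ∏ j, h (c j) := by
  have e : (PowerSeries.mk h) ^ s = ∏ _j : Fin s, PowerSeries.mk h := by simp
  rw [e, PowerSeries.coeff_prod]
  have e2 : ∑ c ∈ comps s m, ∏ j, h (c j)
      = ∑ c ∈ Finset.Nat.antidiagonalTuple s m, ∏ j, h (c j) := by
    unfold comps
    apply Finset.sum_filter_of_ne
    intro c _ hne j
    by_contra hj
    apply hne
    apply Finset.prod_eq_zero (Finset.mem_univ j)
    rw [show c j = 0 by omega, h0]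
  rw [e2]
  refine Finset.sum_bij' (fun l _ => (l : Fin s → ℕ))
    (fun c _ => Finsupp.equivFunOnFinite.symm c) ?_ ?_ ?_ ?_ ?_
  · intro l hl
    rw [Finset.mem_finsuppAntidiag] at hl
    rw [Finset.Nat.mem_antidiagonalTuple]
    exact hl.1
  · intro c hc
    rw [Finset.Nat.mem_antidiagonalTuple] at hc
    rw [Finset.mem_finsuppAntidiag]
    exact ⟨by simpa using hc, Finset.subset_univ _⟩
  · intro l _
    ext; simp
  · intro c _
    ext; simp
  · intro l _
    simp

lemma coeff_pow_zero_of_lt (h : ℕ → ℚ) (h0 : h 0 = 0) (s m : ℕ) (hm : m < s) :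
    PowerSeries.coeff m ((PowerSeries.mk h) ^ s) = 0 := by
  have : (PowerSeries.X : PowerSeries ℚ) ∣ PowerSeries.mk h := by
    rw [PowerSeries.X_dvd_iff, ← PowerSeries.coeff_zero_eq_constantCoeff_apply]
    simpa using h0
  exact PowerSeries.X_pow_dvd_iff.mp (pow_dvd_pow_of_dvd this s) m hm

/-- normalised reciprocal F-factorials without constant term -/
def hser (f : ℕ → ℚ) (n : ℕ) : ℚ := if n = 0 then 0 else (ffact f n)⁻¹

/-- coefficients of the inverse series -/
noncomputable def bser (f : ℕ → ℚ) (m : ℕ) : ℚ :=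
  ∑ s ∈ Finset.range (m + 1), (-1 : ℚ) ^ s * PowerSeries.coeff m ((PowerSeries.mk (hser f)) ^ s)

lemma hser_zero (f : ℕ → ℚ) : hser f 0 = 0 := by simp [hser]

lemma ffact_zero (f : ℕ → ℚ) : ffact f 0 = 1 := by simp [ffact]

lemma bser_eq (f : ℕ → ℚ) (m N : ℕ) (h : m < N) :
    bser f m = PowerSeries.coeff m (∑ s ∈ Finset.range N, (-PowerSeries.mk (hser f)) ^ s) := by
  have e : ∀ s, PowerSeries.coeff m ((-PowerSeries.mk (hser f)) ^ s)
      = (-1 : ℚ) ^ s * PowerSeries.coeff m ((PowerSeries.mk (hser f)) ^ s) := by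
    intro s
    rw [neg_pow]
    rcases neg_one_pow_eq_or (PowerSeries ℚ) s with h1 | h1 <;>
    rcases Nat.even_or_odd s with h2 | h2 <;> simp [h2]
  rw [map_sum]
  simp only [e]
  unfold bser
  apply Finset.sum_subset
  · intro x; simp only [Finset.mem_range]; omega
  · intro x _ hx
    rw [coeff_pow_zero_of_lt _ (hser_zero f), mul_zero]
    simpa using hx

lemma gser_mul_bser (f : ℕ → ℚ) :
    PowerSeries.mk (fun n => (ffact f n)⁻¹) * PowerSeries.mk (bser f) = 1 := by
  have hG : PowerSeries.mk (fun n => (ffact f n)⁻¹) = 1 + PowerSeries.mk (hser f) := by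
    ext n
    rcases n with _ | n <;> simp [hser, ffact_zero, PowerSeries.coeff_one]
  ext m
  have : PowerSeries.coeff m (PowerSeries.mk (fun n => (ffact f n)⁻¹) * PowerSeries.mk (bser f))
      = PowerSeries.coeff m (PowerSeries.mk (fun n => (ffact f n)⁻¹) *
        ∑ s ∈ Finset.range (m + 1), (-PowerSeries.mk (hser f)) ^ s) := by
    rw [PowerSeries.coeff_mul, PowerSeries.coeff_mul]
    apply Finset.sum_congr rfl
    intro p hp
    rw [Finset.HasAntidiagonal.mem_antidiagonal] at hp
    rw [← bser_eq f p.2 (m + 1) (by omega), PowerSeries.coeff_mk, PowerSeries.coeff_mk]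
  rw [this, hG, show (1 + PowerSeries.mk (hser f)) = 1 - (-PowerSeries.mk (hser f)) by ring,
    mul_neg_geom_sum, map_sub]
  have z : PowerSeries.coeff m ((-PowerSeries.mk (hser f)) ^ (m + 1)) = 0 := by
    have := coeff_pow_zero_of_lt (hser f) (hser_zero f) (m + 1) m (by omega)
    rcases Nat.even_or_odd (m + 1) with h2 | h2
    · rw [h2.neg_pow, this]
    · rw [h2.neg_pow, map_neg, this, neg_zero]
  rw [z, sub_zero]

lemma ffact_ne (f : ℕ → ℚ) (hf : ∀ i : ℕ, 1 ≤ i → f i ≠ 0) (n : ℕ) : ffact f n ≠ 0 :=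
  Finset.prod_ne_zero_iff.mpr fun i _ => hf (i + 1) (by omega)

lemma Bf_eq (f : ℕ → ℚ) (hf : ∀ i : ℕ, 1 ≤ i → f i ≠ 0) (n k : ℕ) (hk : k ≤ n) :
    (ffact f n)⁻¹ * Bf f n k = bser f (n - k) * (ffact f k)⁻¹ := by
  have hn := ffact_ne f hf n
  unfold Bf
  split_ifs with h
  · subst h
    simp [bser]
  · have hb : bser f (n - k) = ∑ s ∈ Finset.Icc 1 (n - k), (-1 : ℚ) ^ s *
        ∑ c ∈ comps s (n - k), ∏ j, hser f (c j) := by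
      unfold bser
      simp only [← coeff_pow_comps _ (hser_zero f)]
      symm
      apply Finset.sum_subset
      · intro x; simp only [Finset.mem_range, Finset.mem_Icc]; omega
      · intro x hx hx'
        simp only [Finset.mem_range, Finset.mem_Icc] at hx hx'
        have : x = 0 := by omega
        subst this
        have : n - k ≠ 0 := by omega
        simp [PowerSeries.coeff_one, this]
    rw [hb, Finset.mul_sum, Finset.sum_mul]
    apply Finset.sum_congr rfl
    intro s _
    rw [mul_left_comm, mul_assoc, Finset.mul_sum, Finset.sum_mul]
    congr 1
    apply Finset.sum_congr rfl
    intro c hc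
    have : ∏ j, hser f (c j) = (∏ j, ffact f (c j))⁻¹ := by
      rw [← Finset.prod_inv_distrib]
      apply Finset.prod_congr rfl
      intro j _
      have := (Finset.mem_filter.mp hc).2 j
      rw [hser, if_neg (by omega)]
    rw [this, div_eq_mul_inv, mul_inv, inv_mul_cancel_left₀ hn, mul_comm]

/-- For a polynomial sequence `Φ` with `Φ_0 = 1`, the expansions
`Φ_n(x) = Σ_k B_f(n,k)·x^k` and `x^n = Σ_k C_f(n,k)·Φ_k(x)` are equivalent. -/
theorem Fnomial_polynomial_inversion (f : ℕ → ℚ) (hf : ∀ i : ℕ, 1 ≤ i → f i ≠ 0)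
    (Φ : ℕ → Polynomial ℚ) (hΦ0 : Φ 0 = 1) :
    (∀ n : ℕ, Φ n = ∑ k ∈ Finset.range (n + 1), Polynomial.C (Bf f n k) * X ^ k) ↔
      (∀ n : ℕ, (X : Polynomial ℚ) ^ n =
        ∑ k ∈ Finset.range (n + 1), Polynomial.C (Cf f n k) * Φ k) := by
  have hne := ffact_ne f hf
  set P : PowerSeries (Polynomial ℚ) :=
    PowerSeries.mk (fun n => Polynomial.C (ffact f n)⁻¹ * Φ n) with hP
  set E : PowerSeries (Polynomial ℚ) :=
    PowerSeries.mk (fun n => Polynomial.C (ffact f n)⁻¹ * X ^ n) with hE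
  set G : PowerSeries (Polynomial ℚ) :=
    PowerSeries.map Polynomial.C (PowerSeries.mk (fun n => (ffact f n)⁻¹)) with hG
  set B : PowerSeries (Polynomial ℚ) :=
    PowerSeries.map Polynomial.C (PowerSeries.mk (bser f)) with hB
  have hGB : G * B = 1 := by
    rw [hG, hB, ← map_mul, gser_mul_bser, map_one]
  have cancel : ∀ (n : ℕ) (p q : Polynomial ℚ),
      p = q ↔ Polynomial.C (ffact f n)⁻¹ * p = Polynomial.C (ffact f n)⁻¹ * q := by
    intro n p q
    have : Polynomial.C (ffact f n)⁻¹ ≠ 0 := by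
      simpa using hne n
    exact (mul_right_inj' this).symm
  have h1 : (∀ n : ℕ, Φ n = ∑ k ∈ Finset.range (n + 1), Polynomial.C (Bf f n k) * X ^ k) ↔
      P = E * B := by
    rw [PowerSeries.ext_iff]
    apply forall_congr'
    intro n
    rw [cancel n, PowerSeries.coeff_mul, Finset.Nat.sum_antidiagonal_eq_sum_range_succ_mk,
      Finset.mul_sum, hP, PowerSeries.coeff_mk]
    apply Eq.congr rfl
    apply Finset.sum_congr rfl
    intro k hk
    rw [hE, hB, PowerSeries.coeff_mk, PowerSeries.coeff_map, PowerSeries.coeff_mk, ← mul_assoc,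
      ← Polynomial.C_mul, Bf_eq f hf n k (by simpa [Nat.lt_succ_iff] using hk), Polynomial.C_mul]
    ring
  have h2 : (∀ n : ℕ, (X : Polynomial ℚ) ^ n =
        ∑ k ∈ Finset.range (n + 1), Polynomial.C (Cf f n k) * Φ k) ↔ E = P * G := by
    rw [PowerSeries.ext_iff]
    apply forall_congr'
    intro n
    rw [cancel n, PowerSeries.coeff_mul, Finset.Nat.sum_antidiagonal_eq_sum_range_succ_mk,
      Finset.mul_sum, hE, PowerSeries.coeff_mk]
    apply Eq.congr rfl
    apply Finset.sum_congr rfl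
    intro k hk
    rw [hP, hG, PowerSeries.coeff_mk, PowerSeries.coeff_map, PowerSeries.coeff_mk, ← mul_assoc,
      ← Polynomial.C_mul, Cf, div_eq_mul_inv, inv_mul_cancel_left₀ (hne n), mul_inv,
      Polynomial.C_mul]
    ring
  rw [h1, h2]
  constructor
  · intro h
    rw [h, mul_assoc, mul_comm B G, hGB, mul_one]
  · intro h
    rw [h, mul_assoc, hGB, mul_one]
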